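/- Let E ⊆ F be a field extension and let n = n_1 + ⋯ + n_ℓ be a partition of a positive integer n. An F-linear bijection f : F^n → F^n is an isometry for the sum-rank distance d_SR (i.e., d_SR(f(u), f(v)) = d_SR(u, v) for all u, v ∈ F^n) if and only if there exist nonzero scalars a_1, …, a_ℓ ∈ F*, invertible matrices M_i ∈ GL(n_i, E) for i = 1, …, ℓ, and a permutation π of {1, …, ℓ} satisfying n_{π(i)} = n_i for all i, such that f((c^(1) | … | c^(ℓ))) = (a_1 c^(π^{-1}(1)) M_1 | … | a_ℓ c^(π^{-1}(ℓ)) M_ℓ) for every c ∈ F^n. -/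

import Mathlib

/-- The rank weight of a vector over `F` with respect to the extension `F/E`. -/
noncomputable def rankWt (E : Type*) {F : Type*} [Field E] [Field F] [Algebra E F]
    {N : ℕ} (v : Fin N → F) : ℕ :=
  Module.finrank E (Submodule.span E (Set.range v) : Submodule E F)

/-- The sum-rank weight of `c ∈ F^n` with respect to the partition
`n = n 0 + ⋯ + n (ℓ-1)` and the extension `F/E`. -/
noncomputable def srWtP (E : Type*) {F : Type*} [Field E] [Field F] [Algebra E F]
    {ℓ : ℕ} {n : Fin ℓ → ℕ} (c : (i : Fin ℓ) → Fin (n i) → F) : ℕ :=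
  ∑ i, rankWt E (c i)

section SumRank

variable {E F : Type*} [Field E] [Field F] [Algebra E F]

instance finiteDimensional_span_range {N : ℕ} (v : Fin N → F) :
    FiniteDimensional E (Submodule.span E (Set.range v)) :=
  FiniteDimensional.span_of_finite E (Set.finite_range v)

theorem rankWt_eq_zero {N : ℕ} {v : Fin N → F} : rankWt E v = 0 ↔ v = 0 := by
  rw [rankWt, Submodule.finrank_eq_zero, Submodule.span_eq_bot]
  simp [funext_iff]

theorem rankWt_zero {N : ℕ} : rankWt E (0 : Fin N → F) = 0 :=
  rankWt_eq_zero.2 rfl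

/-- Scaling by `F` and multiplying by a matrix over `E` does not increase the rank weight. -/
theorem rankWt_le_of_eq_mul_sum {m N : ℕ} {v : Fin m → F} {w : Fin N → F} (a : F)
    (M : Matrix (Fin m) (Fin N) E)
    (h : ∀ j, w j = a * ∑ k, v k * algebraMap E F (M k j)) :
    rankWt E w ≤ rankWt E v := by
  have hle : Submodule.span E (Set.range w) ≤
      (Submodule.span E (Set.range v)).map (LinearMap.mulLeft E a) := by
    rw [Submodule.span_le]
    rintro _ ⟨j, rfl⟩
    refine ⟨∑ k, v k * algebraMap E F (M k j), ?_, (h j).symm⟩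
    refine Submodule.sum_mem _ fun k _ => ?_
    rw [mul_comm, ← Algebra.smul_def]
    exact Submodule.smul_mem _ _ (Submodule.subset_span ⟨k, rfl⟩)
  exact (Submodule.finrank_mono hle).trans (Submodule.finrank_map_le _ _)

theorem rankWt_smul_algebraMap_le_one {N : ℕ} (a : F) (x : Fin N → E) :
    rankWt E (fun j => a * algebraMap E F (x j)) ≤ 1 := by
  refine (rankWt_le_of_eq_mul_sum (v := fun _ : Fin 1 => (1 : F)) a (fun _ j => x j)
    (by simp)).trans ?_
  exact (finrank_range_le_card _).trans (by simp)

theorem exists_eq_mul_algebraMap_of_rankWt_le_one {N : ℕ} {v : Fin N → F}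
    (h : rankWt E v ≤ 1) : ∃ (a : F) (x : Fin N → E), ∀ j, v j = a * algebraMap E F (x j) := by
  obtain ⟨⟨a, ha⟩, hx⟩ := finrank_le_one_iff.1 h
  choose x hx using fun j => hx ⟨v j, Submodule.subset_span ⟨j, rfl⟩⟩
  refine ⟨a, x, fun j => ?_⟩
  have := congrArg Subtype.val (hx j)
  rw [← show x j • a = v j from this, Algebra.smul_def, mul_comm]

/-- A linear equivalence mapping vectors of rank weight at most one to such vectors is given
by a scalar and an invertible matrix over the small field. -/
theorem exists_matrix_of_rankWt_le_one {m N : ℕ} (e : (Fin m → F) ≃ₗ[F] (Fin N → F))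
    (he : ∀ v, rankWt E v ≤ 1 → rankWt E (e v) ≤ 1) :
    ∃ (a : F) (M : Matrix (Fin m) (Fin N) E), a ≠ 0 ∧
      (∃ M' : Matrix (Fin N) (Fin m) E, M * M' = 1 ∧ M' * M = 1) ∧
      ∀ c j, e c j = a * ∑ k, c k * algebraMap E F (M k j) := by
  obtain rfl : m = N := by simpa using e.finrank_eq
  rcases Nat.eq_zero_or_pos m with rfl | hm
  · exact ⟨1, 1, one_ne_zero, ⟨1, by simp, by simp⟩, fun c j => j.elim0⟩
  set A : Matrix (Fin m) (Fin m) F := fun j k => e (Pi.single j 1) k with hA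
  have heA : ∀ c, e c = Matrix.vecMul c A := by
    intro c
    conv_lhs => rw [pi_eq_sum_univ' c]
    ext k
    simp [Matrix.vecMul, dotProduct, hA, Finset.sum_apply]
  have hdetA : A.det ≠ 0 := by
    intro h0
    obtain ⟨v, hv, hv0⟩ := Matrix.exists_vecMul_eq_zero_iff.2 h0
    rw [← heA] at hv0
    exact hv (by simpa using hv0)
  have hunit : ∀ j : Fin m, rankWt E (Pi.single j 1 : Fin m → F) ≤ 1 := by
    intro j
    convert rankWt_smul_algebraMap_le_one (1 : F) (Pi.single j 1 : Fin m → E) using 2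
    ext k
    by_cases hk : k = j
    · subst hk; simp
    · simp [hk]
  choose l Y hY using fun j => exists_eq_mul_algebraMap_of_rankWt_le_one (he _ (hunit j))
  let Y' : Matrix (Fin m) (Fin m) E := Y
  have hAY : A = Matrix.diagonal l * Y'.map (algebraMap E F) := by
    ext j k
    rw [Matrix.diagonal_mul]
    exact hY j k
  have hdetmap : ∀ B : Matrix (Fin m) (Fin m) E,
      (B.map (algebraMap E F)).det = algebraMap E F B.det := fun B =>
    ((algebraMap E F).map_det B).symm
  have hdetY : IsUnit Y'.det := by
    rw [isUnit_iff_ne_zero]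
    intro h0
    apply hdetA
    rw [hAY, Matrix.det_mul, hdetmap, h0, map_zero, mul_zero]
  obtain ⟨a, z, hz⟩ := exists_eq_mul_algebraMap_of_rankWt_le_one
    (he (fun _ => 1) (by
      simpa using rankWt_smul_algebraMap_le_one (1 : F) (fun _ : Fin m => (1 : E))))
  set t := Matrix.vecMul z Y'⁻¹ with ht
  have hl : ∀ j, l j = a * algebraMap E F (t j) := by
    have h1 : Matrix.vecMul l (Y'.map (algebraMap E F)) = a • (algebraMap E F ∘ z) := by
      have : Matrix.vecMul (fun _ => (1 : F)) A = a • (algebraMap E F ∘ z) := by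
        rw [← heA]; ext j; simp [hz]
      rw [← this, hAY, ← Matrix.vecMul_vecMul]
      congr 1
      ext j
      simp [Matrix.vecMul_diagonal]
    have h2 : Matrix.vecMul (a • (algebraMap E F ∘ t)) (Y'.map (algebraMap E F))
        = a • (algebraMap E F ∘ z) := by
      rw [Matrix.smul_vecMul]
      congr 1
      ext j
      rw [Function.comp_apply, ← RingHom.map_vecMul, ht, Matrix.vecMul_vecMul,
        Matrix.nonsing_inv_mul _ hdetY, Matrix.vecMul_one]
    have h3 := Matrix.vecMul_injective_of_isUnit (A := Y'.map (algebraMap E F))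
      ((Matrix.isUnit_iff_isUnit_det _).2 (by rw [hdetmap]; exact hdetY.map _))
      (h1.trans h2.symm)
    intro j
    simpa using congrFun h3 j
  set M : Matrix (Fin m) (Fin m) E := Matrix.diagonal t * Y' with hM
  have hAM : A = a • M.map (algebraMap E F) := by
    ext j k
    simp [hAY, hM, Matrix.diagonal_mul, hl, mul_assoc]
  have ha : a ≠ 0 := by
    rintro rfl
    have : Nonempty (Fin m) := ⟨⟨0, hm⟩⟩
    exact hdetA (by rw [hAM, zero_smul, Matrix.det_zero])
  have hdetM : IsUnit M.det := by
    rw [isUnit_iff_ne_zero]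
    intro h0
    exact hdetA (by rw [hAM, Matrix.det_smul, hdetmap, h0, map_zero, mul_zero])
  refine ⟨a, M, ha, ⟨M⁻¹, Matrix.mul_nonsing_inv _ hdetM, Matrix.nonsing_inv_mul _ hdetM⟩,
    fun c j => ?_⟩
  rw [heA, hAM, Matrix.vecMul_smul]
  simp [Matrix.vecMul, dotProduct]

section Blocks

variable {ℓ : ℕ} {n : Fin ℓ → ℕ}

theorem srWtP_single (i : Fin ℓ) (v : Fin (n i) → F) :
    srWtP E (Pi.single i v : (i : Fin ℓ) → Fin (n i) → F) = rankWt E v := by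
  rw [srWtP, Finset.sum_eq_single i]
  · simp
  · intro j _ hj
    rw [Pi.single_eq_of_ne hj, rankWt_zero]
  · simp

theorem srWtP_eq_zero {c : (i : Fin ℓ) → Fin (n i) → F} : srWtP E c = 0 ↔ c = 0 := by
  simp [srWtP, rankWt_eq_zero, funext_iff]

theorem rankWt_apply_le_srWtP (c : (i : Fin ℓ) → Fin (n i) → F) (i : Fin ℓ) :
    rankWt E (c i) ≤ srWtP E c :=
  Finset.single_le_sum (f := fun i => rankWt E (c i)) (fun _ _ => Nat.zero_le _)
    (Finset.mem_univ i)

theorem eq_zero_of_srWtP_le_one {c : (i : Fin ℓ) → Fin (n i) → F} (h : srWtP E c ≤ 1)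
    {i j : Fin ℓ} (hij : i ≠ j) (hi : c i ≠ 0) : c j = 0 := by
  by_contra hj
  have hi' := Nat.pos_of_ne_zero (mt (rankWt_eq_zero (E := E)).1 hi)
  have hj' := Nat.pos_of_ne_zero (mt (rankWt_eq_zero (E := E)).1 hj)
  have hpair : ∑ k ∈ {i, j}, rankWt E (c k) ≤ srWtP E c :=
    Finset.sum_le_sum_of_subset (Finset.subset_univ _)
  rw [Finset.sum_pair hij] at hpair
  omega

/-- A weight-preserving linear map sends each block into a single block. -/
theorem exists_block_map (hn : ∀ i, 0 < n i)
    (f : ((i : Fin ℓ) → Fin (n i) → F) →ₗ[F] ((i : Fin ℓ) → Fin (n i) → F))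
    (hf : ∀ c, srWtP E (f c) = srWtP E c) :
    ∃ σ : Fin ℓ → Fin ℓ, ∀ i q v, q ≠ σ i → f (Pi.single i v) q = 0 := by
  have hle : ∀ i (x : Fin (n i) → E),
      srWtP E (f (Pi.single i fun j => algebraMap E F (x j))) ≤ 1 := by
    intro i x
    rw [hf, srWtP_single]
    simpa using rankWt_smul_algebraMap_le_one (1 : F) x
  have hblock : ∀ i, ∃ k, ∀ q v, q ≠ k → f (Pi.single i v) q = 0 := by
    intro i
    let u : Fin (n i) → Fin (n i) → E := fun j => Pi.single j 1
    let b : Fin (n i) → Fin (n i) → F := fun j k => algebraMap E F (u j k)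
    have hb : ∀ j, b j = Pi.single j 1 := by
      intro j
      ext k
      by_cases hk : k = j
      · subst hk; simp [b, u]
      · simp [b, u, hk]
    let j₀ : Fin (n i) := ⟨0, hn i⟩
    have hne : f (Pi.single i (b j₀)) ≠ 0 := by
      intro h0
      have h1 := hf (Pi.single i (b j₀))
      rw [h0, srWtP_eq_zero.2 rfl, eq_comm, srWtP_single, rankWt_eq_zero, hb] at h1
      simpa using congrFun h1 j₀
    obtain ⟨k, hk⟩ := Function.ne_iff.1 hne
    refine ⟨k, fun q v hq => ?_⟩
    have hbasis : ∀ j, f (Pi.single i (b j)) q = 0 := by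
      intro j
      have h₀ : f (Pi.single i (b j₀)) q = 0 :=
        eq_zero_of_srWtP_le_one (hle i (u j₀)) hq.symm hk
      by_contra hj
      have hjk : f (Pi.single i (b j)) k = 0 :=
        eq_zero_of_srWtP_le_one (hle i (u j)) hq hj
      have hadd : (fun l => algebraMap E F ((u j₀ + u j) l)) = b j₀ + b j := by
        ext l
        simp [b]
      have hs := hle i (u j₀ + u j)
      rw [hadd, Pi.single_add, map_add] at hs
      have := eq_zero_of_srWtP_le_one hs hq.symm (by simpa [hjk] using hk)
      exact hj (by simpa [h₀] using this)
    have hzero : LinearMap.proj q ∘ₗ f ∘ₗ LinearMap.single F (fun i => Fin (n i) → F) i = 0 := by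
      refine LinearMap.pi_ext' fun j => LinearMap.ext_ring ?_
      have := hbasis j
      rw [hb] at this
      simpa using this
    simpa using LinearMap.congr_fun hzero v
  choose σ hσ using hblock
  exact ⟨σ, hσ⟩

theorem block_map_leftInverse (hn : ∀ i, 0 < n i)
    (f : ((i : Fin ℓ) → Fin (n i) → F) ≃ₗ[F] ((i : Fin ℓ) → Fin (n i) → F))
    {σ τ : Fin ℓ → Fin ℓ} (hσ : ∀ i q v, q ≠ σ i → f (Pi.single i v) q = 0)
    (hτ : ∀ i q v, q ≠ τ i → f.symm (Pi.single i v) q = 0) :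
    Function.LeftInverse τ σ := by
  intro i
  by_contra h
  have h1 : f (Pi.single i fun _ => 1) = Pi.single (σ i) (f (Pi.single i fun _ => 1) (σ i)) := by
    ext1 q
    by_cases hq : q = σ i
    · subst hq; simp
    · rw [hσ _ _ _ hq, Pi.single_eq_of_ne hq]
  have h2 := hτ (σ i) i (f (Pi.single i fun _ => 1) (σ i)) (Ne.symm h)
  rw [← h1, f.symm_apply_apply, Pi.single_eq_same] at h2
  simpa using congrFun h2 ⟨0, hn i⟩

end Blocks

end SumRank

/-- An `F`-linear bijection of `F^n` (with `n` partitioned as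
`n = n 0 + ⋯ + n (ℓ-1)`) is an isometry for the sum-rank distance iff it is of the
form `c ↦ (a₁ c^{(π⁻¹(1))} M₁ | … | a_ℓ c^{(π⁻¹(ℓ))} M_ℓ)` for nonzero scalars
`aᵢ ∈ F*`, invertible matrices `Mᵢ` over `E`, and a permutation `π` of the blocks
with `n (π i) = n i`. -/
theorem linear_sumRank_isometries (E F : Type*) [Field E] [Field F] [Algebra E F]
    (ℓ : ℕ) (hℓ : 0 < ℓ) (n : Fin ℓ → ℕ) (hn : ∀ i, 0 < n i)
    (f : ((i : Fin ℓ) → Fin (n i) → F) ≃ₗ[F] ((i : Fin ℓ) → Fin (n i) → F)) :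
    (∀ u v : (i : Fin ℓ) → Fin (n i) → F,
        srWtP E (f u - f v) = srWtP E (u - v))
    ↔ ∃ (a : Fin ℓ → F) (π : Equiv.Perm (Fin ℓ))
        (M : (i : Fin ℓ) → Matrix (Fin (n (π.symm i))) (Fin (n i)) E),
        (∀ i, a i ≠ 0) ∧ (∀ i, n (π i) = n i) ∧
        (∀ i, ∃ M' : Matrix (Fin (n i)) (Fin (n (π.symm i))) E,
            M i * M' = 1 ∧ M' * M i = 1) ∧
        (∀ (c : (i : Fin ℓ) → Fin (n i) → F) (i : Fin ℓ) (j : Fin (n i)),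
            f c i j = a i * ∑ k, c (π.symm i) k * algebraMap E F (M i k j)) := by
  constructor
  · intro h
    have hf : ∀ c, srWtP E (f c) = srWtP E c := fun c => by simpa using h c 0
    have hg : ∀ c, srWtP E (f.symm c) = srWtP E c := fun c => by
      rw [← hf, f.apply_symm_apply]
    obtain ⟨σ, hσ⟩ := exists_block_map (E := E) hn f.toLinearMap hf
    obtain ⟨τ, hτ⟩ := exists_block_map (E := E) hn f.symm.toLinearMap hg
    simp only [LinearEquiv.coe_coe] at hσ hτ
    let π : Equiv.Perm (Fin ℓ) :=
      ⟨σ, τ, block_map_leftInverse hn f hσ hτ, block_map_leftInverse hn f.symm hτ hσ⟩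
    have hfs : ∀ i v, f (Pi.single (π.symm i) v) = Pi.single i (f (Pi.single (π.symm i) v) i) := by
      intro i v
      ext1 q
      by_cases hq : q = i
      · subst hq; simp
      · rw [hσ _ _ _ (by rwa [show σ (π.symm i) = i from π.apply_symm_apply i]),
          Pi.single_eq_of_ne hq]
    have hgs : ∀ i v, f.symm (Pi.single i v) =
        Pi.single (π.symm i) (f.symm (Pi.single i v) (π.symm i)) := by
      intro i v
      ext1 q
      by_cases hq : q = π.symm i
      · subst hq; simp
      · rw [hτ _ _ _ hq, Pi.single_eq_of_ne hq]
    let e : ∀ i, (Fin (n (π.symm i)) → F) ≃ₗ[F] (Fin (n i) → F) := fun i =>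
      LinearEquiv.ofLinearMap
        (LinearMap.proj i ∘ₗ f.toLinearMap ∘ₗ LinearMap.single F (fun i => Fin (n i) → F) (π.symm i))
        (LinearMap.proj (π.symm i) ∘ₗ f.symm.toLinearMap ∘ₗ LinearMap.single F (fun i => Fin (n i) → F) i)
        (LinearMap.ext fun v => by
          change f (Pi.single (π.symm i) (f.symm (Pi.single i v) (π.symm i))) i = v
          rw [← hgs, f.apply_symm_apply, Pi.single_eq_same])
        (LinearMap.ext fun v => by
          change f.symm (Pi.single i (f (Pi.single (π.symm i) v) i)) (π.symm i) = v
          rw [← hfs, f.symm_apply_apply, Pi.single_eq_same])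
    have he : ∀ i v, e i v = f (Pi.single (π.symm i) v) i := fun _ _ => rfl
    choose a M ha hM haM using fun i => exists_matrix_of_rankWt_le_one (E := E) (e i)
      (fun v hv => by
        rw [he]
        refine (rankWt_apply_le_srWtP _ i).trans ?_
        rwa [hf, srWtP_single])
    refine ⟨a, π, M, ha, fun i => ?_, hM, fun c i j => ?_⟩
    · simpa using (e (π i)).finrank_eq.symm
    · rw [← haM, he]
      refine congrFun ?_ j
      conv_lhs => rw [← Finset.univ_sum_single c, map_sum, Finset.sum_apply]
      refine Finset.sum_eq_single _ (fun k _ hk => hσ _ _ _ ?_) (by simp)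
      rintro rfl
      exact hk (π.symm_apply_apply k).symm
  · rintro ⟨a, π, M, ha, -, hM, hfM⟩ u v
    rw [← map_sub, srWtP, srWtP, ← Equiv.sum_comp π.symm fun i => rankWt E ((u - v) i)]
    refine Finset.sum_congr rfl fun i _ => ?_
    generalize u - v = c
    obtain ⟨M', hMM', -⟩ := hM i
    refine le_antisymm (rankWt_le_of_eq_mul_sum (a i) (M i) (hfM c i))
      (rankWt_le_of_eq_mul_sum (a i)⁻¹ M' fun k => ?_)
    have hw : f c i = a i • Matrix.vecMul (c (π.symm i)) ((M i).map (algebraMap E F)) := by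
      ext j
      simp [hfM, Matrix.vecMul, dotProduct]
    have h1 : Matrix.vecMul (f c i) (M'.map (algebraMap E F)) = a i • c (π.symm i) := by
      rw [hw, Matrix.smul_vecMul, Matrix.vecMul_vecMul, ← Matrix.map_mul, hMM',
        Matrix.map_one _ (map_zero _) (map_one _), Matrix.vecMul_one]
    have h2 := congrFun h1 k
    simp only [Matrix.vecMul, dotProduct, Matrix.map_apply, Pi.smul_apply, smul_eq_mul] at h2
    rw [h2, inv_mul_cancel_left₀ (ha i)]
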